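/- Let μ and μ' be stable matchings such that Γ*(μ,μ') has exactly one nontrivial weakly connected component, and let u ∈ μ ∪ μ' be a vertex in this nontrivial component. Then every v ∈ A is linked to u. -/

import Mathlib

/-!
The space `E` contains `e_p` whenever `p ∉ μ ∪ μ'` (from `x_p ≥ 0`) and whenever `p ∈ μ ∩ μ'`
(from `x_p ≤ 1`), so only pairs in the symmetric difference of `μ` and `μ'` need an argument. If
the characteristic vector of a set `S` lies in `E` and `S` meets `μ ∪ μ'` exactly in `a` and `b`,
then `a` and `b` are linked (`SMTI.lk_of_chi`), because the remaining coordinates of `S` can be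
discarded. Two kinds of sets `S` suffice.

* The row of a man (or the column of a woman) matched in both `μ` and `μ'`: its degree inequality
  `∑ x ≤ 1` is tight at both matchings. Hence elements of `μ ∪ μ'` in a common row or column are
  linked (`SMTI.lk_row`, `SMTI.lk_col`).
* The closed out-neighbourhood in `Γ` of a vertex `p = (m, w)` of `Γ*(μ, μ')` outside `μ ∪ μ'`: its
  stability inequality `∑ x ≥ 1` is tight at both matchings. Betweenness says that exactly one of
  the two matchings gives `m` a partner at least as good as `w`, and exactly one gives `w` a partner
  at least as good as `m`; stability forces these to be different matchings. This links an element
  of the row of `p` with an element of its column (`SMTI.cross`).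

So for each vertex `p` of `Γ*` all elements of `μ ∪ μ'` in the row or column of `p` are linked to
each other (`SMTI.lk_of_touch`). Adjacent vertices share a row or a column, which contains an
element of `μ ∪ μ'`, so links propagate along paths of `Γ*` (`SMTI.lk_of_path`). Finally, every pair
in the symmetric difference of `μ` and `μ'` is a non-isolated vertex of `Γ*`
(`SMTI.nontrivial_of_diff`), hence lies in the unique nontrivial component together with `u`.
-/

open scoped Classical

/-- An instance of the stable marriage problem with ties: men `M`, women `W`,
acceptable pairs `Acc`, and for each man (resp. woman) a total preorder on the
acceptable partners. `mle m w w'` means `w ≤_m w'`, `wle w m m'` means `m ≤_w m'`. -/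
structure SMTI (M W : Type*) where
  Acc : Set (M × W)
  mle : M → W → W → Prop
  wle : W → M → M → Prop
  mle_refl : ∀ m w, (m, w) ∈ Acc → mle m w w
  mle_trans : ∀ m w₁ w₂ w₃, mle m w₁ w₂ → mle m w₂ w₃ → mle m w₁ w₃
  mle_total : ∀ m w w', (m, w) ∈ Acc → (m, w') ∈ Acc → mle m w w' ∨ mle m w' w
  mle_mem : ∀ m w w', mle m w w' → (m, w) ∈ Acc ∧ (m, w') ∈ Acc
  wle_refl : ∀ w m, (m, w) ∈ Acc → wle w m m
  wle_trans : ∀ w m₁ m₂ m₃, wle w m₁ m₂ → wle w m₂ m₃ → wle w m₁ m₃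
  wle_total : ∀ w m m', (m, w) ∈ Acc → (m', w) ∈ Acc → wle w m m' ∨ wle w m' m
  wle_mem : ∀ w m m', wle w m m' → (m, w) ∈ Acc ∧ (m', w) ∈ Acc

namespace SMTI

variable {M W : Type*} (I : SMTI M W)

/-- `≤_m` extended to `Option W`, where `none` (being single) is strictly below
every acceptable partner. -/
def mleO (m : M) : Option W → Option W → Prop
  | none, none => True
  | none, some w => (m, w) ∈ I.Acc
  | some _, none => False
  | some w, some w' => I.mle m w w'

/-- `≤_w` extended to `Option M`. -/
def wleO (w : W) : Option M → Option M → Prop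
  | none, none => True
  | none, some m => (m, w) ∈ I.Acc
  | some _, none => False
  | some m, some m' => I.wle w m m'

/-- strict version of `mleO` -/
def mltO (m : M) (a b : Option W) : Prop := I.mleO m a b ∧ ¬ I.mleO m b a

/-- strict version of `wleO` -/
def wltO (w : W) (a b : Option M) : Prop := I.wleO w a b ∧ ¬ I.wleO w b a

/-- A matching: a set of acceptable pairs in which every man and every woman
occurs at most once. -/
def IsMatching (μ : Set (M × W)) : Prop :=
  μ ⊆ I.Acc ∧ (∀ m w w', (m, w) ∈ μ → (m, w') ∈ μ → w = w') ∧
    (∀ m m' w, (m, w) ∈ μ → (m', w) ∈ μ → m = m')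

/-- the partner `μ(m)` of a man `m` (`none` if `m` is single) -/
noncomputable def mpartner (μ : Set (M × W)) (m : M) : Option W :=
  if h : ∃ w, (m, w) ∈ μ then some h.choose else none

/-- the partner `μ(w)` of a woman `w` (`none` if `w` is single) -/
noncomputable def wpartner (μ : Set (M × W)) (w : W) : Option M :=
  if h : ∃ m, (m, w) ∈ μ then some h.choose else none

/-- A stable matching: no acceptable pair is blocking. -/
def IsStable (μ : Set (M × W)) : Prop :=
  I.IsMatching μ ∧ ∀ p ∈ I.Acc,
    I.mleO p.1 (some p.2) (mpartner μ p.1) ∨ I.wleO p.2 (some p.1) (wpartner μ p.2)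

/-- `between_m(a, b, c)` -/
def betweenM (m : M) (a b c : Option W) : Prop :=
  a = b ∨ a = c ∨ (I.mltO m b a ∧ I.mleO m a c) ∨ (I.mltO m c a ∧ I.mleO m a b)

/-- `between_w(a, b, c)` -/
def betweenW (w : W) (a b c : Option M) : Prop :=
  a = b ∨ a = c ∨ (I.wltO w b a ∧ I.wleO w a c) ∨ (I.wltO w c a ∧ I.wleO w a b)

/-- the (directed) edge relation of the marriage graph `Γ` -/
def gammaEdge (p q : M × W) : Prop :=
  p ∈ I.Acc ∧ q ∈ I.Acc ∧
    ((p.1 = q.1 ∧ p.2 ≠ q.2 ∧ I.mle p.1 p.2 q.2) ∨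
      (p.2 = q.2 ∧ p.1 ≠ q.1 ∧ I.wle p.2 p.1 q.1))

/-- the vertex set of `Γ*(μ, μ')` -/
noncomputable def starV (μ μ' : Set (M × W)) : Set (M × W) :=
  {p | p ∈ I.Acc ∧
    I.betweenM p.1 (some p.2) (mpartner μ p.1) (mpartner μ' p.1) ∧
    I.betweenW p.2 (some p.1) (wpartner μ p.2) (wpartner μ' p.2)}

/-- undirected adjacency inside the subgraph of `Γ` induced by the vertex set `S` -/
def adjIn (S : Set (M × W)) (p q : M × W) : Prop :=
  p ∈ S ∧ q ∈ S ∧ (I.gammaEdge p q ∨ I.gammaEdge q p)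

/-- `p` and `q` lie in the same weakly connected component of the subgraph of `Γ`
induced by `S` -/
def connIn (S : Set (M × W)) (p q : M × W) : Prop :=
  p ∈ S ∧ q ∈ S ∧ Relation.ReflTransGen (I.adjIn S) p q

/-- `p` is an isolated vertex of the subgraph of `Γ` induced by `S` -/
def IsIsolated (S : Set (M × W)) (p : M × W) : Prop :=
  p ∈ S ∧ ∀ q, ¬ I.adjIn S p q

/-- `C` is a nontrivial weakly connected component of the subgraph of `Γ`
induced by `S` -/
def IsNontrivialComp (S : Set (M × W)) (C : Set (M × W)) : Prop :=
  (∃ v ∈ S, C = {u | I.connIn S v u}) ∧ ¬ C.Subsingleton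

/-- `B` is the vertex set of a principal block (`P^m` or `P^w`) of the subgraph
of `Γ` induced by `S` -/
def IsPrincipalBlock (S : Set (M × W)) (B : Set (M × W)) : Prop :=
  (∃ m : M, B = {p ∈ S | p.1 = m}) ∨ (∃ w : W, B = {p ∈ S | p.2 = w})

/-- characteristic vector `x_ν ∈ ℝ^A` of a set of pairs -/
noncomputable def chi (ν : Set (M × W)) : M × W → ℝ := fun p => if p ∈ ν then 1 else 0

/-- standard basis vector `e_v` -/
noncomputable def eVec (v : M × W) : M × W → ℝ := fun p => if p = v then 1 else 0

/-- dot product on `ℝ^{M × W}` -/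
noncomputable def dotP [Fintype M] [Fintype W] (α x : M × W → ℝ) : ℝ := ∑ p, α p * x p

/-- `E`: the span of all vectors `α` (supported on the acceptable pairs) for which
there is `β` so that `α · x ≥ β` is valid for all stable matchings and tight at
both `μ` and `μ'`. -/
noncomputable def Espace [Fintype M] [Fintype W] (μ μ' : Set (M × W)) :
    Submodule ℝ (M × W → ℝ) :=
  Submodule.span ℝ {α | (∀ p, p ∉ I.Acc → α p = 0) ∧ ∃ β : ℝ,
    (∀ ν, I.IsStable ν → β ≤ dotP α (chi ν)) ∧
    dotP α (chi μ) = β ∧ dotP α (chi μ') = β}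

/-- `a` is linked to `b`: `E` contains `λ e_a + γ e_b` with `λ ≠ 0`. -/
def linked [Fintype M] [Fintype W] (μ μ' : Set (M × W)) (a b : M × W) : Prop :=
  ∃ l g : ℝ, l ≠ 0 ∧ l • eVec a + g • eVec b ∈ I.Espace μ μ'

/-- `x_μ` and `x_μ'` are adjacent extreme points of `P_SMT`: they are distinct, and
whenever their midpoint is a convex combination of extreme points (characteristic
vectors of stable matchings), only `x_μ` and `x_μ'` get nonzero weight. -/
def AdjacentSM [Fintype M] [Fintype W] (μ μ' : Set (M × W)) : Prop :=
  chi μ ≠ chi μ' ∧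
  ∀ (T : Finset (Set (M × W))) (c : Set (M × W) → ℝ),
    (∀ ν ∈ T, I.IsStable ν) → (∀ ν ∈ T, 0 ≤ c ν) → (∑ ν ∈ T, c ν) = 1 →
    (∑ ν ∈ T, c ν • chi ν) = (2⁻¹ : ℝ) • (chi μ + chi μ') →
    ∀ ν ∈ T, c ν ≠ 0 → chi ν = chi μ ∨ chi ν = chi μ'

end SMTI

namespace SMTI

variable {M W : Type*} {I : SMTI M W} {μ μ' ν : Set (M × W)}

/-! ### Partners and matchings -/

theorem mpartner_eq (h : I.IsMatching μ) {m : M} {w : W} (hp : (m, w) ∈ μ) :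
    mpartner μ m = some w := by
  have hex : ∃ w, (m, w) ∈ μ := ⟨w, hp⟩
  rw [mpartner, dif_pos hex, h.2.1 m _ _ hex.choose_spec hp]

theorem wpartner_eq (h : I.IsMatching μ) {m : M} {w : W} (hp : (m, w) ∈ μ) :
    wpartner μ w = some m := by
  have hex : ∃ m, (m, w) ∈ μ := ⟨m, hp⟩
  rw [wpartner, dif_pos hex, h.2.2 _ _ w hex.choose_spec hp]

theorem mem_of_mpartner {m : M} {w : W} (h : mpartner μ m = some w) : (m, w) ∈ μ := by
  unfold mpartner at h
  split_ifs at h with hex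
  have := hex.choose_spec
  rwa [Option.some.inj h] at this

theorem mem_of_wpartner {m : M} {w : W} (h : wpartner μ w = some m) : (m, w) ∈ μ := by
  unfold wpartner at h
  split_ifs at h with hex
  have := hex.choose_spec
  rwa [Option.some.inj h] at this

theorem exists_of_mleO {m : M} {w : W} (h : I.mleO m (some w) (mpartner μ m)) :
    ∃ w', (m, w') ∈ μ ∧ I.mle m w w' := by
  rcases hx : mpartner μ m with _ | w'
  · rw [hx] at h; exact h.elim
  · rw [hx] at h; exact ⟨w', mem_of_mpartner hx, h⟩

theorem exists_of_wleO {m : M} {w : W} (h : I.wleO w (some m) (wpartner μ w)) :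
    ∃ m', (m', w) ∈ μ ∧ I.wle w m m' := by
  rcases hx : wpartner μ w with _ | m'
  · rw [hx] at h; exact h.elim
  · rw [hx] at h; exact ⟨m', mem_of_wpartner hx, h⟩

/-- Stability in terms of elements of the matching: every acceptable pair is dominated by an
element of the matching in its row or in its column. -/
theorem IsStable.dominated (h : I.IsStable μ) {m : M} {w : W} (hp : (m, w) ∈ I.Acc) :
    (∃ w', (m, w') ∈ μ ∧ I.mle m w w') ∨ (∃ m', (m', w) ∈ μ ∧ I.wle w m m') :=
  (h.2 _ hp).imp exists_of_mleO exists_of_wleO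

/-- `m` gets in `μ` a partner at least as good as `w`. -/
def MUp (I : SMTI M W) (μ : Set (M × W)) (m : M) (w : W) : Prop :=
  ∃ w', (m, w') ∈ μ ∧ I.mle m w w'

/-- `w` gets in `μ` a partner at least as good as `m`. -/
def WUp (I : SMTI M W) (μ : Set (M × W)) (m : M) (w : W) : Prop :=
  ∃ m', (m', w) ∈ μ ∧ I.wle w m m'

theorem not_mup_of_mltO (h : I.IsMatching μ) {m : M} {w : W}
    (hlt : I.mltO m (mpartner μ m) (some w)) : ¬ I.MUp μ m w := by
  rintro ⟨w', hw', hle⟩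
  rw [mpartner_eq h hw'] at hlt
  exact hlt.2 hle

theorem not_wup_of_wltO (h : I.IsMatching μ) {m : M} {w : W}
    (hlt : I.wltO w (wpartner μ w) (some m)) : ¬ I.WUp μ m w := by
  rintro ⟨m', hm', hle⟩
  rw [wpartner_eq h hm'] at hlt
  exact hlt.2 hle

theorem betweenM_cases (h : I.IsMatching μ) (h' : I.IsMatching μ') {m : M} {w : W}
    (hn : (m, w) ∉ μ) (hn' : (m, w) ∉ μ')
    (hb : I.betweenM m (some w) (mpartner μ m) (mpartner μ' m)) :
    (¬ I.MUp μ m w ∧ I.MUp μ' m w) ∨ (¬ I.MUp μ' m w ∧ I.MUp μ m w) := by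
  rcases hb with hb | hb | hb | hb
  · exact absurd (mem_of_mpartner hb.symm) hn
  · exact absurd (mem_of_mpartner hb.symm) hn'
  · exact Or.inl ⟨not_mup_of_mltO h hb.1, exists_of_mleO hb.2⟩
  · exact Or.inr ⟨not_mup_of_mltO h' hb.1, exists_of_mleO hb.2⟩

theorem betweenW_cases (h : I.IsMatching μ) (h' : I.IsMatching μ') {m : M} {w : W}
    (hn : (m, w) ∉ μ) (hn' : (m, w) ∉ μ')
    (hb : I.betweenW w (some m) (wpartner μ w) (wpartner μ' w)) :
    (¬ I.WUp μ m w ∧ I.WUp μ' m w) ∨ (¬ I.WUp μ' m w ∧ I.WUp μ m w) := by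
  rcases hb with hb | hb | hb | hb
  · exact absurd (mem_of_wpartner hb.symm) hn
  · exact absurd (mem_of_wpartner hb.symm) hn'
  · exact Or.inl ⟨not_wup_of_wltO h hb.1, exists_of_wleO hb.2⟩
  · exact Or.inr ⟨not_wup_of_wltO h' hb.1, exists_of_wleO hb.2⟩

theorem row_unique (h : I.IsMatching μ) {a b : M × W} (ha : a ∈ μ) (hb : b ∈ μ)
    (he : a.1 = b.1) : a = b := by
  obtain ⟨m, w⟩ := a
  obtain ⟨m', w'⟩ := b
  obtain rfl : m = m' := he
  rw [h.2.1 m w w' ha hb]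

theorem col_unique (h : I.IsMatching μ) {a b : M × W} (ha : a ∈ μ) (hb : b ∈ μ)
    (he : a.2 = b.2) : a = b := by
  obtain ⟨m, w⟩ := a
  obtain ⟨m', w'⟩ := b
  obtain rfl : w = w' := he
  rw [h.2.2 m m' w ha hb]

theorem acc_of_mem (hμ : I.IsStable μ) (hμ' : I.IsStable μ') {a : M × W} (ha : a ∈ μ ∪ μ') :
    a ∈ I.Acc :=
  ha.elim (fun h => hμ.1.1 h) (fun h => hμ'.1.1 h)

theorem mem_starV (hμ : I.IsStable μ) (hμ' : I.IsStable μ') {p : M × W} (hp : p ∈ μ ∪ μ') :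
    p ∈ I.starV μ μ' := by
  rcases hp with hp | hp
  · exact ⟨hμ.1.1 hp, Or.inl (mpartner_eq hμ.1 hp).symm, Or.inl (wpartner_eq hμ.1 hp).symm⟩
  · exact ⟨hμ'.1.1 hp, Or.inr (Or.inl (mpartner_eq hμ'.1 hp).symm),
      Or.inr (Or.inl (wpartner_eq hμ'.1 hp).symm)⟩

/-- A pair of `μ` outside `μ'` is not isolated in `Γ*(μ, μ')`: stability of `μ'` provides an
out-neighbour in `μ'`. -/
theorem exists_adj_of_diff (hμ : I.IsStable μ) (hμ' : I.IsStable μ') {p : M × W}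
    (hp : p ∈ μ) (hp' : p ∉ μ') : ∃ q ∈ μ', p ≠ q ∧ I.gammaEdge p q := by
  obtain ⟨m, w⟩ := p
  have hA := hμ.1.1 hp
  rcases hμ'.dominated hA with ⟨w', hw', hle⟩ | ⟨m', hm', hle⟩
  · have hne : w ≠ w' := by rintro rfl; exact hp' hw'
    exact ⟨(m, w'), hw', by simpa using hne, hA, hμ'.1.1 hw', Or.inl ⟨rfl, hne, hle⟩⟩
  · have hne : m ≠ m' := by rintro rfl; exact hp' hm'
    exact ⟨(m', w), hm', by simpa using hne, hA, hμ'.1.1 hm', Or.inr ⟨rfl, hne, hle⟩⟩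

theorem nontrivial_of_diff (hμ : I.IsStable μ) (hμ' : I.IsStable μ') {p : M × W}
    (hp : p ∈ μ ∪ μ') (hi : ¬ (p ∈ μ ∧ p ∈ μ')) :
    I.IsNontrivialComp (I.starV μ μ') {u | I.connIn (I.starV μ μ') p u} := by
  have hS := mem_starV hμ hμ' hp
  have : ∃ q ∈ μ ∪ μ', p ≠ q ∧ I.gammaEdge p q := by
    rcases hp with h | h
    · obtain ⟨q, hq, h2⟩ := exists_adj_of_diff hμ hμ' h (fun h' => hi ⟨h, h'⟩)
      exact ⟨q, Or.inr hq, h2⟩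
    · obtain ⟨q, hq, h2⟩ := exists_adj_of_diff hμ' hμ h (fun h' => hi ⟨h', h⟩)
      exact ⟨q, Or.inl hq, h2⟩
  obtain ⟨q, hq, hne, hE⟩ := this
  have hqS := mem_starV hμ hμ' hq
  refine ⟨⟨p, hS, rfl⟩, fun hsub => hne (hsub ?_ ?_)⟩
  · exact ⟨hS, hS, .refl⟩
  · exact ⟨hS, hqS, .single ⟨hS, hqS, Or.inl hE⟩⟩

/-! ### Vectors in the space `E` -/

section

variable [Fintype M] [Fintype W]

theorem Espace_comm : I.Espace μ μ' = I.Espace μ' μ := by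
  unfold Espace
  congr 1
  ext α
  simp only [Set.mem_ofPred_eq, and_comm (a := dotP α (chi μ) = _)]

theorem one_le_dotP {S : Set (M × W)} {p : M × W} (hS : p ∈ S) (hν : p ∈ ν) :
    1 ≤ dotP (chi S) (chi ν) := by
  have := Finset.single_le_sum (f := fun p => chi S p * chi ν p) (s := Finset.univ)
    (fun q _ => by unfold chi; positivity) (Finset.mem_univ p)
  simpa [dotP, chi, hS, hν] using this

theorem dotP_le_one {S : Set (M × W)} (h : (S ∩ ν).Subsingleton) :
    dotP (chi S) (chi ν) ≤ 1 := by
  unfold dotP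
  by_cases hne : ∃ p, p ∈ S ∩ ν
  · obtain ⟨p, hp⟩ := hne
    rw [Finset.sum_eq_single p]
    · simp [chi, hp.1, hp.2]
    · intro q _ hq
      have : ¬ (q ∈ S ∧ q ∈ ν) := fun hq' => hq (h hq' hp)
      unfold chi
      by_cases h1 : q ∈ S <;> by_cases h2 : q ∈ ν <;> simp_all
    · simp
  · rw [Finset.sum_eq_zero]
    · exact zero_le_one
    · intro q _
      have : ¬ (q ∈ S ∧ q ∈ ν) := fun hq' => hne ⟨q, hq'⟩
      unfold chi
      by_cases h1 : q ∈ S <;> by_cases h2 : q ∈ ν <;> simp_all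

/-- A valid inequality `∑_{p ∈ S} x_p ≤ 1` tight at both matchings. -/
theorem chi_mem_of_le {S : Set (M × W)} (hS : S ⊆ I.Acc)
    (hle : ∀ ν, I.IsStable ν → (S ∩ ν).Subsingleton)
    (hμ : I.IsStable μ) (hμ' : I.IsStable μ') (h : (S ∩ μ).Nonempty) (h' : (S ∩ μ').Nonempty) :
    chi S ∈ I.Espace μ μ' := by
  have hneg : ∀ ν : Set (M × W), dotP (-chi S) (chi ν) = -dotP (chi S) (chi ν) := by
    intro ν; simp [dotP]
  have heq : ∀ ν, I.IsStable ν → (S ∩ ν).Nonempty → dotP (-chi S) (chi ν) = -1 := by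
    rintro ν hν ⟨p, hp⟩
    rw [hneg, le_antisymm (dotP_le_one (hle ν hν)) (one_le_dotP hp.1 hp.2)]
  rw [← neg_neg (chi S)]
  refine Submodule.neg_mem _ (Submodule.subset_span ⟨?_, -1, ?_, heq μ hμ h, heq μ' hμ' h'⟩)
  · intro p hp
    have : p ∉ S := fun h => hp (hS h)
    simp [chi, this]
  · intro ν hν
    rw [hneg]
    exact neg_le_neg (dotP_le_one (hle ν hν))

/-- A valid inequality `∑_{p ∈ S} x_p ≥ 1` tight at both matchings. -/
theorem chi_mem_of_ge {S : Set (M × W)} (hS : S ⊆ I.Acc)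
    (hge : ∀ ν, I.IsStable ν → (S ∩ ν).Nonempty)
    (hμ : I.IsStable μ) (hμ' : I.IsStable μ')
    (h : (S ∩ μ).Subsingleton) (h' : (S ∩ μ').Subsingleton) :
    chi S ∈ I.Espace μ μ' := by
  have hge' : ∀ ν, I.IsStable ν → 1 ≤ dotP (chi S) (chi ν) := by
    intro ν hν
    obtain ⟨p, hp⟩ := hge ν hν
    exact one_le_dotP hp.1 hp.2
  refine Submodule.subset_span ⟨?_, 1, hge', le_antisymm (dotP_le_one h) (hge' μ hμ),
    le_antisymm (dotP_le_one h') (hge' μ' hμ')⟩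
  intro p hp
  have : p ∉ S := fun h => hp (hS h)
  simp [chi, this]

theorem eVec_mem_of_notMem {v : M × W} (hv : v ∈ I.Acc) (h : v ∉ μ) (h' : v ∉ μ') :
    eVec v ∈ I.Espace μ μ' := by
  have hdot : ∀ ν : Set (M × W), dotP (eVec v) (chi ν) = chi ν v := by
    intro ν; simp [dotP, eVec]
  refine Submodule.subset_span ⟨?_, 0, ?_, ?_, ?_⟩
  · intro p hp
    have : p ≠ v := by rintro rfl; exact hp hv
    simp [eVec, this]
  · intro ν _
    rw [hdot]; unfold chi; positivity
  · simp [hdot, chi, h]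
  · simp [hdot, chi, h']

theorem eVec_mem_of_inter (hμ : I.IsStable μ) (hμ' : I.IsStable μ') {v : M × W}
    (h : v ∈ μ) (h' : v ∈ μ') : eVec v ∈ I.Espace μ μ' := by
  have : (eVec v : M × W → ℝ) = chi {v} := by
    ext p; simp [eVec, chi]
  rw [this]
  refine chi_mem_of_le ?_ ?_ hμ hμ' ⟨v, rfl, h⟩ ⟨v, rfl, h'⟩
  · rintro p rfl; exact hμ.1.1 h
  · exact fun ν _ => Set.subsingleton_singleton.anti Set.inter_subset_left

/-- Vectors supported on acceptable pairs outside `μ ∪ μ'` belong to `E`. -/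
theorem mem_Espace_of_support {x : M × W → ℝ} (hA : ∀ p, p ∉ I.Acc → x p = 0)
    (h : ∀ p ∈ μ ∪ μ', x p = 0) : x ∈ I.Espace μ μ' := by
  have : x = ∑ p, x p • eVec p := by
    ext q; simp [Finset.sum_apply, eVec]
  rw [this]
  refine Submodule.sum_mem _ fun p _ => ?_
  by_cases hp : x p = 0
  · rw [hp, zero_smul]; exact Submodule.zero_mem _
  · refine Submodule.smul_mem _ _ (eVec_mem_of_notMem ?_ ?_ ?_)
    · by_contra hc; exact hp (hA p hc)
    · exact fun hc => hp (h p (Or.inl hc))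
    · exact fun hc => hp (h p (Or.inr hc))

/-! ### Links with two nonzero coefficients -/

/-- The symmetric form of being linked: `E` contains `e_a + g e_b` with `g ≠ 0`. Unlike `linked`,
this is an equivalence relation. -/
def Lk (I : SMTI M W) (μ μ' : Set (M × W)) (a b : M × W) : Prop :=
  ∃ g : ℝ, g ≠ 0 ∧ eVec a + g • eVec b ∈ I.Espace μ μ'

theorem Lk.refl (a : M × W) : I.Lk μ μ' a a :=
  ⟨-1, by norm_num, by simp⟩

theorem Lk.symm {a b : M × W} (h : I.Lk μ μ' a b) : I.Lk μ μ' b a := by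
  obtain ⟨g, hg, h⟩ := h
  refine ⟨g⁻¹, inv_ne_zero hg, ?_⟩
  have := Submodule.smul_mem _ g⁻¹ h
  rwa [smul_add, smul_smul, inv_mul_cancel₀ hg, one_smul, add_comm] at this

theorem Lk.trans {a b c : M × W} (h : I.Lk μ μ' a b) (h' : I.Lk μ μ' b c) :
    I.Lk μ μ' a c := by
  obtain ⟨g, hg, h⟩ := h
  obtain ⟨k, hk, h'⟩ := h'
  refine ⟨-(g * k), neg_ne_zero.2 (mul_ne_zero hg hk), ?_⟩
  have := Submodule.sub_mem _ h (Submodule.smul_mem _ g h')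
  convert this using 1
  module

theorem Lk.linked {a b : M × W} (h : I.Lk μ μ' a b) : I.linked μ μ' a b := by
  obtain ⟨g, -, h⟩ := h
  exact ⟨1, g, one_ne_zero, by rwa [one_smul]⟩

theorem lk_of_chi {S : Set (M × W)} (hS : S ⊆ I.Acc) (hE : chi S ∈ I.Espace μ μ') {a b : M × W}
    (ha : a ∈ S) (hb : b ∈ S) (hab : ∀ p ∈ S, p ∈ μ ∪ μ' → p = a ∨ p = b) :
    I.Lk μ μ' a b := by
  by_cases hne : a = b
  · rw [hne]; exact Lk.refl b
  have hrest : chi S - (eVec a + (1 : ℝ) • eVec b) ∈ I.Espace μ μ' := by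
    refine mem_Espace_of_support (fun p hp => ?_) (fun p hp => ?_)
    · have h1 : p ∉ S := fun h => hp (hS h)
      have h2 : p ≠ a := by rintro rfl; exact h1 ha
      have h3 : p ≠ b := by rintro rfl; exact h1 hb
      simp [chi, eVec, h1, h2, h3]
    · by_cases h1 : p ∈ S
      · rcases hab p h1 hp with rfl | rfl
        · simp [chi, eVec, h1, hne]
        · simp [chi, eVec, h1, Ne.symm hne]
      · have h2 : p ≠ a := by rintro rfl; exact h1 ha
        have h3 : p ≠ b := by rintro rfl; exact h1 hb
        simp [chi, eVec, h1, h2, h3]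
  refine ⟨1, one_ne_zero, ?_⟩
  have := Submodule.sub_mem _ hE hrest
  rwa [sub_sub_cancel] at this

/-! ### Links inside rows and columns -/

/-- A set of acceptable pairs meeting every stable matching at most once, such as a row or a column,
has all its elements in `μ ∪ μ'` linked to each other. -/
theorem lk_of_subsingleton (hμ : I.IsStable μ) (hμ' : I.IsStable μ') {S : Set (M × W)}
    (hS : S ⊆ I.Acc) (hle : ∀ ν, I.IsStable ν → (S ∩ ν).Subsingleton) {a b : M × W}
    (haS : a ∈ S) (hbS : b ∈ S) (ha : a ∈ μ ∪ μ') (hb : b ∈ μ ∪ μ') : I.Lk μ μ' a b := by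
  have key : ∀ a b, a ∈ S → b ∈ S → a ∈ μ → b ∈ μ' → I.Lk μ μ' a b := by
    intro a b haS hbS ha hb
    refine lk_of_chi hS (chi_mem_of_le hS hle hμ hμ' ⟨a, haS, ha⟩ ⟨b, hbS, hb⟩) haS hbS ?_
    rintro p hp (h | h)
    · exact Or.inl (hle μ hμ ⟨hp, h⟩ ⟨haS, ha⟩)
    · exact Or.inr (hle μ' hμ' ⟨hp, h⟩ ⟨hbS, hb⟩)
  rcases ha with ha | ha <;> rcases hb with hb | hb
  · rw [hle μ hμ ⟨haS, ha⟩ ⟨hbS, hb⟩]; exact Lk.refl b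
  · exact key a b haS hbS ha hb
  · exact (key b a hbS haS hb ha).symm
  · rw [hle μ' hμ' ⟨haS, ha⟩ ⟨hbS, hb⟩]; exact Lk.refl b

theorem lk_row (hμ : I.IsStable μ) (hμ' : I.IsStable μ') {a b : M × W}
    (ha : a ∈ μ ∪ μ') (hb : b ∈ μ ∪ μ') (he : a.1 = b.1) : I.Lk μ μ' a b :=
  lk_of_subsingleton hμ hμ' (S := {p | p ∈ I.Acc ∧ p.1 = b.1}) (fun _ h => h.1)
    (fun _ hν _ hp _ hq => row_unique hν.1 hp.2 hq.2 (hp.1.2.trans hq.1.2.symm))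
    ⟨acc_of_mem hμ hμ' ha, he⟩ ⟨acc_of_mem hμ hμ' hb, rfl⟩ ha hb

theorem lk_col (hμ : I.IsStable μ) (hμ' : I.IsStable μ') {a b : M × W}
    (ha : a ∈ μ ∪ μ') (hb : b ∈ μ ∪ μ') (he : a.2 = b.2) : I.Lk μ μ' a b :=
  lk_of_subsingleton hμ hμ' (S := {p | p ∈ I.Acc ∧ p.2 = b.2}) (fun _ h => h.1)
    (fun _ hν _ hp _ hq => col_unique hν.1 hp.2 hq.2 (hp.1.2.trans hq.1.2.symm))
    ⟨acc_of_mem hμ hμ' ha, he⟩ ⟨acc_of_mem hμ hμ' hb, rfl⟩ ha hb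

/-! ### Links along `Γ*(μ, μ')` -/

/-- The tight stability inequality of a pair `(m, w)` with `μ(m) < w ≤ μ'(m)` and
`μ'(w) < m ≤ μ(w)`. -/
theorem cross_aux (hμ : I.IsStable μ) (hμ' : I.IsStable μ') {m : M} {w : W}
    (hA : (m, w) ∈ I.Acc) (h1 : ¬ I.MUp μ m w) (h2 : I.MUp μ' m w)
    (h3 : ¬ I.WUp μ' m w) (h4 : I.WUp μ m w) :
    ∃ a ∈ μ ∪ μ', ∃ b ∈ μ ∪ μ', a.1 = m ∧ b.2 = w ∧ I.Lk μ μ' a b := by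
  obtain ⟨w', hw', hle⟩ := h2
  obtain ⟨m', hm', hle'⟩ := h4
  -- the closed out-neighbourhood of `(m, w)` in `Γ`
  let S : Set (M × W) := {q | (q.1 = m ∧ I.mle m w q.2) ∨ (q.2 = w ∧ I.wle w m q.1)}
  have hS : S ⊆ I.Acc := by
    rintro ⟨x, y⟩ (⟨rfl, h⟩ | ⟨rfl, h⟩)
    · exact (I.mle_mem _ _ _ h).2
    · exact (I.wle_mem _ _ _ h).2
  have hSμ : ∀ p ∈ S, p ∈ μ → p = (m', w) := by
    rintro ⟨x, y⟩ (⟨rfl, h⟩ | ⟨rfl, h⟩) hp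
    · exact absurd ⟨y, hp, h⟩ h1
    · exact col_unique hμ.1 hp hm' rfl
  have hSμ' : ∀ p ∈ S, p ∈ μ' → p = (m, w') := by
    rintro ⟨x, y⟩ (⟨rfl, h⟩ | ⟨rfl, h⟩) hp
    · exact row_unique hμ'.1 hp hw' rfl
    · exact absurd ⟨x, hp, h⟩ h3
  have hE : chi S ∈ I.Espace μ μ' := by
    refine chi_mem_of_ge hS (fun ν hν => ?_) hμ hμ' ?_ ?_
    · rcases hν.dominated hA with ⟨y, hy, h⟩ | ⟨x, hx, h⟩
      · exact ⟨(m, y), Or.inl ⟨rfl, h⟩, hy⟩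
      · exact ⟨(x, w), Or.inr ⟨rfl, h⟩, hx⟩
    · exact fun p hp q hq => (hSμ p hp.1 hp.2).trans (hSμ q hq.1 hq.2).symm
    · exact fun p hp q hq => (hSμ' p hp.1 hp.2).trans (hSμ' q hq.1 hq.2).symm
  refine ⟨(m, w'), Or.inr hw', (m', w), Or.inl hm', rfl, rfl, ?_⟩
  refine lk_of_chi hS hE (Or.inl ⟨rfl, hle⟩) (Or.inr ⟨rfl, hle'⟩) ?_
  rintro p hp (h | h)
  · exact Or.inr (hSμ p hp h)
  · exact Or.inl (hSμ' p hp h)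

/-- Every vertex of `Γ*(μ, μ')` has elements of `μ ∪ μ'` in its row and in its column that are
linked to each other. -/
theorem cross (hμ : I.IsStable μ) (hμ' : I.IsStable μ') {p : M × W} (hp : p ∈ I.starV μ μ') :
    ∃ a ∈ μ ∪ μ', ∃ b ∈ μ ∪ μ', a.1 = p.1 ∧ b.2 = p.2 ∧ I.Lk μ μ' a b := by
  by_cases hpu : p ∈ μ ∪ μ'
  · exact ⟨p, hpu, p, hpu, rfl, rfl, Lk.refl p⟩
  obtain ⟨m, w⟩ := p
  obtain ⟨hA, hM, hW⟩ := hp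
  have hn : (m, w) ∉ μ := fun h => hpu (Or.inl h)
  have hn' : (m, w) ∉ μ' := fun h => hpu (Or.inr h)
  rcases betweenM_cases hμ.1 hμ'.1 hn hn' hM with ⟨h1, h2⟩ | ⟨h1, h2⟩
  · have h4 : I.WUp μ m w := (hμ.dominated hA).resolve_left h1
    have h3 : ¬ I.WUp μ' m w := by
      rcases betweenW_cases hμ.1 hμ'.1 hn hn' hW with h | h
      · exact absurd h4 h.1
      · exact h.1
    exact cross_aux hμ hμ' hA h1 h2 h3 h4
  · have h4 : I.WUp μ' m w := (hμ'.dominated hA).resolve_left h1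
    have h3 : ¬ I.WUp μ m w := by
      rcases betweenW_cases hμ.1 hμ'.1 hn hn' hW with h | h
      · exact h.1
      · exact absurd h4 h.1
    have := cross_aux hμ' hμ hA h1 h2 h3 h4
    unfold Lk at this ⊢
    rwa [Set.union_comm, Espace_comm]

/-- `a` is an element of `μ ∪ μ'` in the row or in the column of `p`. -/
def Touch (μ μ' : Set (M × W)) (p a : M × W) : Prop :=
  a ∈ μ ∪ μ' ∧ (a.1 = p.1 ∨ a.2 = p.2)

theorem lk_of_touch (hμ : I.IsStable μ) (hμ' : I.IsStable μ') {p a b : M × W}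
    (hp : p ∈ I.starV μ μ') (ha : Touch μ μ' p a) (hb : Touch μ μ' p b) : I.Lk μ μ' a b := by
  obtain ⟨r, hr, c, hc, hrp, hcp, hrc⟩ := cross hμ hμ' hp
  have toRow : ∀ x, Touch μ μ' p x → I.Lk μ μ' x r := by
    rintro x ⟨hx, h | h⟩
    · exact lk_row hμ hμ' hx hr (h.trans hrp.symm)
    · exact (lk_col hμ hμ' hx hc (h.trans hcp.symm)).trans hrc.symm
  exact (toRow a ha).trans (toRow b hb).symm

theorem exists_touch_of_adj (hμ : I.IsStable μ) (hμ' : I.IsStable μ') {p q : M × W}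
    (h : I.adjIn (I.starV μ μ') p q) : ∃ c, Touch μ μ' p c ∧ Touch μ μ' q c := by
  obtain ⟨hp, -, hE⟩ := h
  obtain ⟨r, hr, c, hc, hrp, hcp, -⟩ := cross hμ hμ' hp
  have : p.1 = q.1 ∨ p.2 = q.2 := by
    rcases hE with ⟨-, -, h | h⟩ | ⟨-, -, h | h⟩
    · exact Or.inl h.1
    · exact Or.inr h.1
    · exact Or.inl h.1.symm
    · exact Or.inr h.1.symm
  rcases this with h | h
  · exact ⟨r, ⟨hr, Or.inl hrp⟩, ⟨hr, Or.inl (hrp.trans h)⟩⟩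
  · exact ⟨c, ⟨hc, Or.inr hcp⟩, ⟨hc, Or.inr (hcp.trans h)⟩⟩

theorem lk_of_path (hμ : I.IsStable μ) (hμ' : I.IsStable μ') {p q : M × W}
    (hp : p ∈ I.starV μ μ') (h : Relation.ReflTransGen (I.adjIn (I.starV μ μ')) p q)
    {a : M × W} (ha : Touch μ μ' p a) : ∀ b, Touch μ μ' q b → I.Lk μ μ' a b := by
  induction h with
  | refl => exact fun b hb => lk_of_touch hμ hμ' hp ha hb
  | tail _ hadj ih =>
    intro b hb
    obtain ⟨c, hc, hc'⟩ := exists_touch_of_adj hμ hμ' hadj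
    exact (ih c hc).trans (lk_of_touch hμ hμ' hadj.2.1 hc' hb)

end

end SMTI

open SMTI in

theorem stmt9 {M W : Type*} [Fintype M] [Fintype W] (I : SMTI M W)
    (μ μ' : Set (M × W)) (hμ : I.IsStable μ) (hμ' : I.IsStable μ')
    (hone : ∃! C, I.IsNontrivialComp (I.starV μ μ') C)
    (C : Set (M × W)) (hC : I.IsNontrivialComp (I.starV μ μ') C)
    (u : M × W) (huC : u ∈ C) (hu : u ∈ μ ∪ μ') :
    ∀ v ∈ I.Acc, I.linked μ μ' v u := by
  intro v hv
  by_cases hvu : v ∈ μ ∪ μ'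
  · by_cases hi : v ∈ μ ∧ v ∈ μ'
    · exact ⟨1, 0, one_ne_zero, by simpa using eVec_mem_of_inter hμ hμ' hi.1 hi.2⟩
    · have hCv := hone.unique hC (nontrivial_of_diff hμ hμ' hvu hi)
      rw [hCv] at huC
      obtain ⟨hvS, -, hpath⟩ := huC
      exact (lk_of_path hμ hμ' hvS hpath ⟨hvu, Or.inl rfl⟩ u ⟨hu, Or.inl rfl⟩).linked
  · refine ⟨1, 0, one_ne_zero, ?_⟩
    simpa using eVec_mem_of_notMem hv (fun h => hvu (Or.inl h)) (fun h => hvu (Or.inr h))
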